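/- A Skolem sequence of order n exists if and only if n ≡ 0 or 3 (mod 4). -/

import Mathlib

/-- A Skolem sequence of order `n`: a permutation of the multiset
`{1,1,2,2,...,n,n}` (indexed by `0 ≤ i < 2n`) satisfying the Skolem property. -/
def IsSkolem (n : ℕ) (ζ : ℕ → ℕ) : Prop :=
  (↑((List.range (2 * n)).map ζ) : Multiset ℕ) =
      (Finset.Icc 1 n).val + (Finset.Icc 1 n).val ∧
  ∀ i j, i < j → j < 2 * n → ζ i = ζ j → j - i = ζ i + 1

/-- An extended Skolem sequence of order `n`: a permutation of the multiset
`{0,0,1,1,...,n,n}` (indexed by `0 ≤ i < 2(n+1)`) satisfying the Skolem property. -/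
def IsESS (n : ℕ) (ζ : ℕ → ℕ) : Prop :=
  (↑((List.range (2 * (n + 1))).map ζ) : Multiset ℕ) =
      (Finset.Icc 0 n).val + (Finset.Icc 0 n).val ∧
  ∀ i j, i < j → j < 2 * (n + 1) → ζ i = ζ j → j - i = ζ i + 1

/-- Cyclic shift of a length-`L` sequence by an integer amount `a`. -/
def shiftZ (u : ℕ → ℕ) (L : ℕ) (a : ℤ) : ℕ → ℕ :=
  fun t => u ((((t : ℤ) + a) % (L : ℤ)).toNat)

/-- The set of delivery channels between two length-`L` sequences. -/
def deliveryChannels (L : ℕ) (v w : ℕ → ℕ) : Set ℕ :=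
  {h | ∃ t < L, v t = h ∧ w t = h}

/-- The set of delivery slots between two length-`L` sequences. -/
def deliverySlots (L : ℕ) (v w : ℕ → ℕ) : Finset ℕ :=
  (Finset.range L).filter (fun t => v t = w t)

open Finset

theorem range_map_coe (ζ : ℕ → ℕ) (N : ℕ) :
    (↑((List.range N).map ζ) : Multiset ℕ) = (range N).val.map ζ := rfl

theorem count_map_range (ζ : ℕ → ℕ) (N k : ℕ) :
    ((range N).val.map ζ).count k = #{p ∈ range N | ζ p = k} := by
  rw [Multiset.count_map, Finset.card_def, Finset.filter_val]
  simp only [eq_comm]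

theorem count_Icc_add_Icc (n k : ℕ) :
    ((Icc 1 n).val + (Icc 1 n).val).count k = if k ∈ Icc 1 n then 2 else 0 := by
  rw [Multiset.count_add]
  split_ifs with hk
  · rw [Multiset.count_eq_one_of_mem (Icc 1 n).nodup hk]
  · rw [Multiset.count_eq_zero_of_notMem hk]

/-- Being a permutation of `{1,1,...,n,n}` in terms of the fibers of the sequence. -/
theorem card_fiber {n : ℕ} {ζ : ℕ → ℕ}
    (h : (↑((List.range (2 * n)).map ζ) : Multiset ℕ) = (Icc 1 n).val + (Icc 1 n).val) (k : ℕ) :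
    #{p ∈ range (2 * n) | ζ p = k} = if k ∈ Icc 1 n then 2 else 0 := by
  rw [← count_map_range, ← range_map_coe, h, count_Icc_add_Icc]

theorem mapsTo_Icc {n : ℕ} {ζ : ℕ → ℕ}
    (h : (↑((List.range (2 * n)).map ζ) : Multiset ℕ) = (Icc 1 n).val + (Icc 1 n).val)
    {p : ℕ} (hp : p ∈ range (2 * n)) : ζ p ∈ Icc 1 n := by
  by_contra hk
  have hc := card_fiber h (ζ p)
  rw [if_neg hk, card_eq_zero] at hc
  exact notMem_empty p (hc ▸ mem_filter.2 ⟨hp, rfl⟩)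

/-- A sequence of length `2n` in which every `k ∈ {1, ..., n}` occurs at two positions that
differ by `k + 1` is a Skolem sequence. -/
theorem isSkolem_of_exists_pair {n : ℕ} {ζ : ℕ → ℕ}
    (h : ∀ k ∈ Icc 1 n, ∃ p, p + k + 1 < 2 * n ∧ ζ p = k ∧ ζ (p + k + 1) = k) :
    IsSkolem n ζ := by
  have pair_subset : ∀ {k p}, p + k + 1 < 2 * n → ζ p = k → ζ (p + k + 1) = k →
      {p, p + k + 1} ⊆ ({p ∈ range (2 * n) | ζ p = k} : Finset ℕ) := by
    intro k p hp h₁ h₂ x hx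
    rw [mem_insert, mem_singleton] at hx
    rw [mem_filter, mem_range]
    rcases hx with rfl | rfl
    · exact ⟨by omega, h₁⟩
    · exact ⟨hp, h₂⟩
  have card_two : ∀ k p : ℕ, #{p, p + k + 1} = 2 := fun k p => card_pair (by omega)
  have hperm : (↑((List.range (2 * n)).map ζ) : Multiset ℕ) =
      (Icc 1 n).val + (Icc 1 n).val := by
    symm
    apply Multiset.eq_of_le_of_card_le
    · rw [Multiset.le_iff_count]
      intro k
      rw [count_Icc_add_Icc, range_map_coe, count_map_range]
      split_ifs with hk
      · obtain ⟨p, hp, h₁, h₂⟩ := h k hk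
        exact (card_two k p).symm.le.trans (card_le_card (pair_subset hp h₁ h₂))
      · exact Nat.zero_le _
    · simp [two_mul]
  refine ⟨hperm, fun i j hij hj hζ => ?_⟩
  have hi : ζ i ∈ Icc 1 n := mapsTo_Icc hperm (mem_range.2 (hij.trans hj))
  obtain ⟨p, hp, h₁, h₂⟩ := h _ hi
  have hfib := eq_of_subset_of_card_le (pair_subset hp h₁ h₂)
    (by rw [card_fiber hperm, if_pos hi, card_two])
  have hi' : i ∈ ({p, p + ζ i + 1} : Finset ℕ) := by
    rw [hfib, mem_filter, mem_range]; exact ⟨hij.trans hj, rfl⟩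
  have hj' : j ∈ ({p, p + ζ i + 1} : Finset ℕ) := by
    rw [hfib, mem_filter, mem_range]; exact ⟨hj, hζ.symm⟩
  rw [mem_insert, mem_singleton] at hi' hj'
  omega

theorem IsSkolem.exists_sum_fiber {n : ℕ} {ζ : ℕ → ℕ} (h : IsSkolem n ζ) (k : ℕ)
    (hk : k ∈ Icc 1 n) : ∃ a, ∑ p ∈ range (2 * n) with ζ p = k, p = 2 * a + (k + 1) := by
  have hc := card_fiber h.1 k
  rw [if_pos hk] at hc
  obtain ⟨i, j, hij, hfib⟩ := card_eq_two.1 hc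
  have hi : i ∈ ({p ∈ range (2 * n) | ζ p = k} : Finset ℕ) := by simp [hfib]
  have hj : j ∈ ({p ∈ range (2 * n) | ζ p = k} : Finset ℕ) := by simp [hfib]
  rw [mem_filter, mem_range] at hi hj
  rw [hfib, sum_pair hij]
  rcases lt_or_gt_of_ne hij with hlt | hlt
  · have := h.2 i j hlt hj.1 (hi.2.trans hj.2.symm)
    exact ⟨i, by omega⟩
  · have := h.2 j i hlt hi.1 (hj.2.trans hi.2.symm)
    exact ⟨j, by omega⟩

theorem sum_Icc_add_one_mul_two (n : ℕ) : (∑ k ∈ Icc 1 n, (k + 1)) * 2 = n * (n + 3) := by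
  induction n with
  | zero => simp
  | succ n ih => rw [sum_Icc_succ_top (by omega), add_mul, ih]; ring

/-- The necessary condition, by computing the parity of the sum of all positions. -/
theorem IsSkolem.mod_four {n : ℕ} {ζ : ℕ → ℕ} (h : IsSkolem n ζ) : n % 4 = 0 ∨ n % 4 = 3 := by
  choose! a ha using h.exists_sum_fiber
  have hsum : ∑ p ∈ range (2 * n), p = 2 * ∑ k ∈ Icc 1 n, a k + ∑ k ∈ Icc 1 n, (k + 1) := by
    rw [← sum_fiberwise_of_maps_to (fun p hp => mapsTo_Icc h.1 hp), sum_congr rfl ha,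
      sum_add_distrib, mul_sum]
  have hpos := sum_range_id_mul_two (2 * n)
  have hlab := sum_Icc_add_one_mul_two n
  rw [hsum] at hpos
  clear hsum ha
  generalize ∑ k ∈ Icc 1 n, (k + 1) = L at hpos hlab
  generalize ∑ k ∈ Icc 1 n, a k = A at hpos
  obtain ⟨q, r, hr, rfl⟩ : ∃ q r, r < 4 ∧ n = 4 * q + r :=
    ⟨n / 4, n % 4, Nat.mod_lt _ (by norm_num), (Nat.div_add_mod n 4).symm⟩
  interval_cases r
  · omega
  · exfalso
    rw [show 2 * (4 * q + 1) - 1 = 8 * q + 1 by omega] at hpos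
    ring_nf at hpos hlab
    omega
  · exfalso
    rw [show 2 * (4 * q + 2) - 1 = 8 * q + 3 by omega] at hpos
    ring_nf at hpos hlab
    omega
  · omega

/-- The common form of the Langford-type arrangements of orders `4m + 3` and `4m + 4`. Position
`4m + 2` carries the label `e`, and positions `8m + 6` and `8m + 7` are used only in
order `4m + 4`. -/
def langford (m e p : ℕ) : ℕ :=
  if p < m then 4 * m - 2 * p
  else if p < 2 * m then 4 * m - 1 - 2 * p
  else if p = 2 * m then 4 * m + 2
  else if p < 3 * m + 1 then 2 * (p - (2 * m + 1)) + 1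
  else if p = 3 * m + 1 then 4 * m + 3
  else if p < 4 * m + 2 then 2 * (p - (3 * m + 2)) + (2 * m + 2)
  else if p = 4 * m + 2 then e
  else if p < 5 * m + 3 then 2 * (5 * m + 2 - p) + (2 * m + 3)
  else if p < 6 * m + 3 then 2 * (6 * m + 2 - p) + 2
  else if p = 6 * m + 3 then 4 * m + 2
  else if p = 6 * m + 4 then 2 * m + 1
  else if p < 7 * m + 5 then 2 * (p - (6 * m + 5)) + 2
  else if p = 7 * m + 5 then 4 * m + 3
  else if p < 8 * m + 6 then 2 * (p - (7 * m + 6)) + (2 * m + 3)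
  else if p = 8 * m + 6 then 2 * m + 1
  else 4 * m + 4

/-- Every label other than `2m + 1` and `4m + 4` is placed correctly. -/
theorem langford_exists_pair (m e : ℕ) {k : ℕ} (hk : 1 ≤ k) (hk' : k ≤ 4 * m + 3)
    (hne : k ≠ 2 * m + 1) :
    ∃ p, p + k + 1 < 8 * m + 6 ∧ langford m e p = k ∧ langford m e (p + k + 1) = k := by
  obtain ⟨j, hj⟩ : ∃ j, k = 2 * j + 1 ∨ k = 2 * j + 2 := ⟨(k - 1) / 2, by omega⟩
  rcases hj with rfl | rfl
  · rcases lt_trichotomy j m with h | h | h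
    · refine ⟨2 * m - 1 - j, by omega, ?_, ?_⟩ <;> grind (splits := 24) [langford]
    · omega
    · rcases Nat.lt_or_ge j (2 * m + 1) with h' | h'
      · refine ⟨6 * m + 3 - j, by omega, ?_, ?_⟩ <;> grind (splits := 24) [langford]
      · refine ⟨3 * m + 1, by omega, ?_, ?_⟩ <;> grind (splits := 24) [langford]
  · rcases Nat.lt_or_ge j m with h | h
    · refine ⟨6 * m + 2 - j, by omega, ?_, ?_⟩ <;> grind (splits := 24) [langford]
    · rcases Nat.lt_or_ge j (2 * m) with h' | h'
      · refine ⟨2 * m - 1 - j, by omega, ?_, ?_⟩ <;> grind (splits := 24) [langford]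
      · refine ⟨2 * m, by omega, ?_, ?_⟩ <;> grind (splits := 24) [langford]

theorem isSkolem_langford_three (m : ℕ) : IsSkolem (4 * m + 3) (langford m (2 * m + 1)) := by
  apply isSkolem_of_exists_pair
  intro k hk
  rw [mem_Icc] at hk
  by_cases h : k = 2 * m + 1
  · refine ⟨4 * m + 2, by omega, ?_, ?_⟩ <;> grind (splits := 24) [langford]
  · obtain ⟨p, hp, hζ⟩ := langford_exists_pair m (2 * m + 1) hk.1 hk.2 h
    exact ⟨p, by omega, hζ⟩

theorem isSkolem_langford_four (m : ℕ) : IsSkolem (4 * m + 4) (langford m (4 * m + 4)) := by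
  apply isSkolem_of_exists_pair
  intro k hk
  rw [mem_Icc] at hk
  by_cases h : k = 2 * m + 1
  · refine ⟨6 * m + 4, by omega, ?_, ?_⟩ <;> grind (splits := 24) [langford]
  by_cases h' : k = 4 * m + 4
  · refine ⟨4 * m + 2, by omega, ?_, ?_⟩ <;> grind (splits := 24) [langford]
  · obtain ⟨p, hp, hζ⟩ := langford_exists_pair m (4 * m + 4) hk.1 (by omega) h
    exact ⟨p, by omega, hζ⟩

/-- A Skolem sequence of order n exists iff n ≡ 0 or 3 (mod 4). -/
theorem skolem_exists_iff (n : ℕ) :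
    (∃ ζ : ℕ → ℕ, IsSkolem n ζ) ↔ (n % 4 = 0 ∨ n % 4 = 3) := by
  constructor
  · rintro ⟨ζ, h⟩
    exact h.mod_four
  · rintro (h | h)
    · rcases Nat.eq_zero_or_pos n with rfl | hn
      · exact ⟨id, isSkolem_of_exists_pair (by simp)⟩
      · obtain ⟨m, rfl⟩ : ∃ m, n = 4 * m + 4 := ⟨n / 4 - 1, by omega⟩
        exact ⟨_, isSkolem_langford_four m⟩
    · obtain ⟨m, rfl⟩ : ∃ m, n = 4 * m + 3 := ⟨n / 4, by omega⟩
      exact ⟨_, isSkolem_langford_three m⟩
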